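/- Let C = (C, ⊗, I) be a monoidal category possessing finite coproducts which are preserved by each functor A ⊗ (−). Then C has a zero object and finite biproducts if and only if the initial object 0 and the coproduct I + I of the unit with itself admit right duals. -/

import Mathlib

open CategoryTheory CategoryTheory.Limits CategoryTheory.MonoidalCategory

universe v u

/-- `Y` is a right dual of `X`, witnessed by `η : 𝟙_ C ⟶ Y ⊗ X`, when every morphism
`f : A ⟶ B ⊗ X` factors as `(g ▷ X) ∘ (A ◁ η)` (modulo unitor and associator) for a
unique `g : A ⊗ Y ⟶ B`. -/
def IsRightDual {C : Type u} [Category.{v} C] [MonoidalCategory C]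
    (X Y : C) (η : 𝟙_ C ⟶ Y ⊗ X) : Prop :=
  ∀ (A B : C) (f : A ⟶ B ⊗ X), ∃! g : A ⊗ Y ⟶ B,
    f = (ρ_ A).inv ≫ (A ◁ η) ≫ (α_ A Y X).inv ≫ (g ▷ X)

/-- `Y` is a left dual of `X`, witnessed by `η : 𝟙_ C ⟶ X ⊗ Y`, when every morphism
`f : A ⟶ X ⊗ B` factors as `(X ◁ g) ∘ (η ▷ A)` (modulo unitor and associator) for a
unique `g : Y ⊗ A ⟶ B`. -/
def IsLeftDual {C : Type u} [Category.{v} C] [MonoidalCategory C]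
    (X Y : C) (η : 𝟙_ C ⟶ X ⊗ Y) : Prop :=
  ∀ (A B : C) (f : A ⟶ X ⊗ B), ∃! g : Y ⊗ A ⟶ B,
    f = (λ_ A).inv ≫ (η ▷ A) ≫ (α_ X Y A).hom ≫ (X ◁ g)

namespace BiprodAux

variable {C : Type u} [Category.{v} C] [MonoidalCategory C]

lemma tensor_initial (hp : ∀ A : C, PreservesFiniteCoproducts (tensorLeft A))
    (A : C) {Z : C} (hZ : IsInitial Z) : Nonempty (IsInitial (A ⊗ Z)) := by
  have := hp A
  exact ⟨IsInitial.isInitialObj (tensorLeft A) Z hZ⟩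

lemma bin_desc [HasFiniteCoproducts C] (hp : ∀ A : C, PreservesFiniteCoproducts (tensorLeft A))
    (A W : C) (a b : A ⊗ 𝟙_ C ⟶ W) :
    ∃ h : A ⊗ (𝟙_ C ⨿ 𝟙_ C) ⟶ W, A ◁ coprod.inl ≫ h = a ∧ A ◁ coprod.inr ≫ h = b := by
  have := hp A
  have l := mapIsColimitOfPreservesOfIsColimit (tensorLeft A) _ _
    (coprodIsCoprod (𝟙_ C) (𝟙_ C))
  obtain ⟨h, h1, h2⟩ := BinaryCofan.IsColimit.desc' l a b
  exact ⟨h, h1, h2⟩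

lemma bin_ext [HasFiniteCoproducts C] (hp : ∀ A : C, PreservesFiniteCoproducts (tensorLeft A))
    (A W : C) (g h : A ⊗ (𝟙_ C ⨿ 𝟙_ C) ⟶ W)
    (h1 : A ◁ (coprod.inl : 𝟙_ C ⟶ 𝟙_ C ⨿ 𝟙_ C) ≫ g = A ◁ coprod.inl ≫ h)
    (h2 : A ◁ (coprod.inr : 𝟙_ C ⟶ 𝟙_ C ⨿ 𝟙_ C) ≫ g = A ◁ coprod.inr ≫ h) : g = h := by
  have := hp A
  have l := mapIsColimitOfPreservesOfIsColimit (tensorLeft A) _ _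
    (coprodIsCoprod (𝟙_ C) (𝟙_ C))
  exact BinaryCofan.IsColimit.hom_ext l h1 h2

lemma sig_desc [HasFiniteCoproducts C] (hp : ∀ A : C, PreservesFiniteCoproducts (tensorLeft A))
    {ι : Type} [Finite ι] (A W : C) (a : ι → (A ⊗ 𝟙_ C ⟶ W)) :
    ∃ h : A ⊗ (∐ fun _ : ι => 𝟙_ C) ⟶ W, ∀ i, A ◁ Sigma.ι (fun _ : ι => 𝟙_ C) i ≫ h = a i := by
  have := hp A
  have l := isColimitCofanMkObjOfIsColimit (tensorLeft A) _ _
    (coproductIsCoproduct (fun _ : ι => 𝟙_ C))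
  exact ⟨Cofan.IsColimit.desc l a, fun i => Cofan.IsColimit.fac l a i⟩

lemma sig_ext [HasFiniteCoproducts C] (hp : ∀ A : C, PreservesFiniteCoproducts (tensorLeft A))
    {ι : Type} [Finite ι] (A W : C) (g h : A ⊗ (∐ fun _ : ι => 𝟙_ C) ⟶ W)
    (H : ∀ i, A ◁ Sigma.ι (fun _ : ι => 𝟙_ C) i ≫ g = A ◁ Sigma.ι (fun _ : ι => 𝟙_ C) i ≫ h) :
    g = h := by
  have := hp A
  have l := isColimitCofanMkObjOfIsColimit (tensorLeft A) _ _
    (coproductIsCoproduct (fun _ : ι => 𝟙_ C))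
  exact Cofan.IsColimit.hom_ext l g h H

lemma whisker_zero [HasZeroMorphisms C]
    (hp : ∀ A : C, PreservesFiniteCoproducts (tensorLeft A))
    {Z : C} (hZ : IsInitial Z) (A P Q : C) : A ◁ (0 : P ⟶ Q) = 0 := by
  have e : (0 : P ⟶ Q) = (0 : P ⟶ Z) ≫ (0 : Z ⟶ Q) := by simp
  obtain ⟨h⟩ := tensor_initial hp A hZ
  rw [e, MonoidalCategory.whiskerLeft_comp, h.hom_ext (A ◁ (0 : Z ⟶ Q)) 0, comp_zero]

lemma pair_unique [HasFiniteCoproducts C] [HasZeroMorphisms C]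
    (hp : ∀ A : C, PreservesFiniteCoproducts (tensorLeft A))
    {Z : C} (hZ : IsInitial Z)
    (H : ∀ f : Bool → C, ∃ (A : C) (inj : ∀ i, f i ⟶ A) (p : ∀ k, A ⟶ f k),
          Nonempty (IsColimit (Cofan.mk A inj)) ∧
          (∀ k, inj k ≫ p k = 𝟙 (f k)) ∧
          (∀ i k, i ≠ k → inj i ≫ p k = 0) ∧
          Nonempty (IsLimit (Fan.mk A p)))
    (B W : C) :
    (∀ a b : W ⟶ B ⊗ 𝟙_ C, ∃ h : W ⟶ B ⊗ (𝟙_ C ⨿ 𝟙_ C),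
      h ≫ B ◁ coprod.desc (𝟙 _) 0 = a ∧ h ≫ B ◁ coprod.desc 0 (𝟙 _) = b) ∧
    (∀ h h' : W ⟶ B ⊗ (𝟙_ C ⨿ 𝟙_ C),
      h ≫ B ◁ coprod.desc (𝟙 _) 0 = h' ≫ B ◁ coprod.desc (𝟙 _) 0 →
      h ≫ B ◁ coprod.desc 0 (𝟙 _) = h' ≫ B ◁ coprod.desc 0 (𝟙 _) → h = h') := by
  obtain ⟨A, inj, p, ⟨hc⟩, h1, h0, ⟨hl⟩⟩ := H (fun _ => B ⊗ 𝟙_ C)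
  let j : Bool → (B ⊗ 𝟙_ C ⟶ B ⊗ (𝟙_ C ⨿ 𝟙_ C)) :=
    fun i => cond i (B ◁ coprod.inl) (B ◁ coprod.inr)
  let φ : A ⟶ B ⊗ (𝟙_ C ⨿ 𝟙_ C) := Cofan.IsColimit.desc hc j
  have hφ : ∀ i, inj i ≫ φ = j i := fun i => Cofan.IsColimit.fac hc j i
  obtain ⟨ψ, ψ1, ψ2⟩ := bin_desc hp B A (inj true) (inj false)
  have ψφ : ψ ≫ φ = 𝟙 _ := by
    apply bin_ext hp
    · rw [← Category.assoc, ψ1, hφ]; simp [j]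
    · rw [← Category.assoc, ψ2, hφ]; simp [j]
  have φt : φ ≫ B ◁ coprod.desc (𝟙 _) 0 = p true := by
    apply Cofan.IsColimit.hom_ext hc
    intro i
    change inj i ≫ _ = inj i ≫ _
    rw [← Category.assoc, hφ]
    cases i
    · rw [h0 _ _ (by simp)]
      simp only [j, cond_false]
      rw [← MonoidalCategory.whiskerLeft_comp, coprod.inr_desc, whisker_zero hp hZ]
    · rw [h1]
      simp only [j, cond_true]
      rw [← MonoidalCategory.whiskerLeft_comp, coprod.inl_desc, MonoidalCategory.whiskerLeft_id]
  have φf : φ ≫ B ◁ coprod.desc 0 (𝟙 _) = p false := by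
    apply Cofan.IsColimit.hom_ext hc
    intro i
    change inj i ≫ _ = inj i ≫ _
    rw [← Category.assoc, hφ]
    cases i
    · rw [h1]
      simp only [j, cond_false]
      rw [← MonoidalCategory.whiskerLeft_comp, coprod.inr_desc, MonoidalCategory.whiskerLeft_id]
    · rw [h0 _ _ (by simp)]
      simp only [j, cond_true]
      rw [← MonoidalCategory.whiskerLeft_comp, coprod.inl_desc, whisker_zero hp hZ]
  have ψt : B ◁ coprod.desc (𝟙 _) 0 = ψ ≫ p true := by
    rw [← φt, ← Category.assoc, ψφ, Category.id_comp]
  have ψf : B ◁ coprod.desc 0 (𝟙 _) = ψ ≫ p false := by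
    rw [← φf, ← Category.assoc, ψφ, Category.id_comp]
  constructor
  · intro a b
    let k : W ⟶ A := Fan.IsLimit.lift hl (fun i => (cond i a b : W ⟶ B ⊗ 𝟙_ C))
    have hk : ∀ i, k ≫ p i = cond i a b := fun i => Fan.IsLimit.fac hl _ i
    refine ⟨k ≫ φ, ?_, ?_⟩
    · rw [Category.assoc, φt, hk]; rfl
    · rw [Category.assoc, φf, hk]; rfl
  · intro h h' e1 e2
    have : h ≫ ψ = h' ≫ ψ := by
      apply Fan.IsLimit.hom_ext hl
      intro i
      change (h ≫ ψ) ≫ p i = (h' ≫ ψ) ≫ p i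
      cases i
      · simpa [← ψf] using e2
      · simpa [← ψt] using e1
    calc h = (h ≫ ψ) ≫ φ := by simp [ψφ]
      _ = (h' ≫ ψ) ≫ φ := by rw [this]
      _ = h' := by simp [ψφ]

lemma forward_zero [HasFiniteCoproducts C]
    (hp : ∀ A : C, PreservesFiniteCoproducts (tensorLeft A))
    {Z : C} (hZi : IsInitial Z) (hZt : IsTerminal Z) :
    ∃ (Y : C) (η : 𝟙_ C ⟶ Y ⊗ (⊥_ C)), IsRightDual (⊥_ C) Y η := by
  have key : ∀ B : C, Nonempty (IsTerminal (B ⊗ (⊥_ C))) := fun B => by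
    obtain ⟨h⟩ := tensor_initial hp B (initialIsInitial (C := C))
    exact ⟨hZt.ofIso (hZi.uniqueUpToIso h)⟩
  obtain ⟨t⟩ := key (⊥_ C)
  refine ⟨⊥_ C, t.from _, fun A B f => ?_⟩
  obtain ⟨i⟩ := tensor_initial hp A (initialIsInitial (C := C))
  obtain ⟨tB⟩ := key B
  exact ⟨i.to B, tB.hom_ext _ _, fun g _ => i.hom_ext _ _⟩

lemma forward_two [HasFiniteCoproducts C] [HasZeroMorphisms C]
    (hp : ∀ A : C, PreservesFiniteCoproducts (tensorLeft A))
    {Z : C} (hZ : IsInitial Z)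
    (H : ∀ f : Bool → C, ∃ (A : C) (inj : ∀ i, f i ⟶ A) (p : ∀ k, A ⟶ f k),
          Nonempty (IsColimit (Cofan.mk A inj)) ∧
          (∀ k, inj k ≫ p k = 𝟙 (f k)) ∧
          (∀ i k, i ≠ k → inj i ≫ p k = 0) ∧
          Nonempty (IsLimit (Fan.mk A p))) :
    ∃ (D : C) (η : 𝟙_ C ⟶ D ⊗ (𝟙_ C ⨿ 𝟙_ C)), IsRightDual (𝟙_ C ⨿ 𝟙_ C) D η := by
  have P := pair_unique hp hZ H
  obtain ⟨η, η1, η2⟩ := (P (𝟙_ C ⨿ 𝟙_ C) (𝟙_ C)).1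
    (coprod.inl ≫ (ρ_ _).inv) (coprod.inr ≫ (ρ_ _).inv)
  refine ⟨𝟙_ C ⨿ 𝟙_ C, η, fun A B f => ?_⟩
  have key : ∀ (q : 𝟙_ C ⨿ 𝟙_ C ⟶ 𝟙_ C) (j : 𝟙_ C ⟶ 𝟙_ C ⨿ 𝟙_ C)
      (_ : η ≫ (𝟙_ C ⨿ 𝟙_ C) ◁ q = j ≫ (ρ_ _).inv) (g : A ⊗ (𝟙_ C ⨿ 𝟙_ C) ⟶ B),
      ((ρ_ A).inv ≫ (A ◁ η) ≫ (α_ A _ _).inv ≫ (g ▷ (𝟙_ C ⨿ 𝟙_ C))) ≫ B ◁ q =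
        (ρ_ A).inv ≫ (A ◁ j ≫ g) ≫ (ρ_ B).inv := by
    intro q j hq g
    have : A ◁ η ≫ A ◁ ((𝟙_ C ⨿ 𝟙_ C) ◁ q) = A ◁ j ≫ A ◁ (ρ_ _).inv := by
      rw [← MonoidalCategory.whiskerLeft_comp, hq, MonoidalCategory.whiskerLeft_comp]
    calc _ = (ρ_ A).inv ≫ (A ◁ η ≫ A ◁ ((𝟙_ C ⨿ 𝟙_ C) ◁ q)) ≫ (α_ A _ _).inv ≫ g ▷ _ := by
          simp only [Category.assoc, ← whisker_exchange, associator_inv_naturality_right_assoc]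
      _ = _ := by rw [this]; simp
  obtain ⟨g, g1, g2⟩ := bin_desc hp A B
    ((ρ_ A).hom ≫ f ≫ B ◁ coprod.desc (𝟙 _) 0 ≫ (ρ_ B).hom)
    ((ρ_ A).hom ≫ f ≫ B ◁ coprod.desc 0 (𝟙 _) ≫ (ρ_ B).hom)
  refine ⟨g, ?_, ?_⟩
  · apply (P B A).2
    · rw [key _ _ η1, g1]; simp
    · rw [key _ _ η2, g2]; simp
  · intro g' hg'
    apply bin_ext hp
    · rw [g1]
      have := key _ _ η1 g'
      rw [← hg'] at this
      simp [reassoc_of% this]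
    · rw [g2]
      have := key _ _ η2 g'
      rw [← hg'] at this
      simp [reassoc_of% this]

lemma terminal_of_map [HasFiniteCoproducts C]
    (hp : ∀ A : C, PreservesFiniteCoproducts (tensorLeft A))
    (e : 𝟙_ C ⟶ ⊥_ C) : Nonempty (IsTerminal (⊥_ C)) := by
  have k := fun A => tensor_initial hp A (initialIsInitial (C := C))
  choose i _ using fun A => (⟨(k A).some, trivial⟩ : ∃ _ : IsInitial (A ⊗ ⊥_ C), True)
  refine ⟨IsTerminal.ofUniqueHom (fun A => (ρ_ A).inv ≫ A ◁ e ≫ (i A).to _) ?_⟩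
  intro A m
  have h1 : (ρ_ (⊥_ C)).inv ≫ (⊥_ C) ◁ e ≫ (i (⊥_ C)).to (⊥_ C) = 𝟙 _ :=
    initialIsInitial.hom_ext _ _
  have h2 : (i A).to (⊥_ C) = m ▷ _ ≫ (i (⊥_ C)).to (⊥_ C) := (i A).hom_ext _ _
  rw [h2, whisker_exchange_assoc, ← rightUnitor_inv_naturality_assoc, h1, Category.comp_id]

lemma diag_two [HasFiniteCoproducts C] [HasZeroMorphisms C]
    (hp : ∀ A : C, PreservesFiniteCoproducts (tensorLeft A))
    {Z : C} (hZ : IsInitial Z)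
    {D : C} {η : 𝟙_ C ⟶ D ⊗ (𝟙_ C ⨿ 𝟙_ C)} (hD : IsRightDual (𝟙_ C ⨿ 𝟙_ C) D η) :
    ∃ δ : 𝟙_ C ⟶ 𝟙_ C ⨿ 𝟙_ C,
      δ ≫ coprod.desc (𝟙 _) 0 = 𝟙 _ ∧ δ ≫ coprod.desc 0 (𝟙 _) = 𝟙 _ := by
  have key : ∀ (j : 𝟙_ C ⟶ 𝟙_ C ⨿ 𝟙_ C), ∃ q : D ⟶ 𝟙_ C,
      j = η ≫ q ▷ _ ≫ (λ_ _).hom := by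
    intro j
    obtain ⟨g, hg, _⟩ := hD (𝟙_ C) (𝟙_ C) (j ≫ (λ_ _).inv)
    refine ⟨(λ_ D).inv ≫ g, ?_⟩
    have : j = (j ≫ (λ_ _).inv) ≫ (λ_ _).hom := by simp
    rw [this, hg, ← unitors_inv_equal]
    simp
  obtain ⟨q1, h1⟩ := key coprod.inl
  obtain ⟨q2, h2⟩ := key coprod.inr
  obtain ⟨s, s1, s2⟩ := bin_desc hp D (𝟙_ C ⨿ 𝟙_ C)
    ((ρ_ D).hom ≫ q1 ≫ coprod.inl) ((ρ_ D).hom ≫ q2 ≫ coprod.inr)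
  have k : ∀ (p : 𝟙_ C ⨿ 𝟙_ C ⟶ 𝟙_ C) (q : D ⟶ 𝟙_ C),
      q ▷ _ ≫ (λ_ _).hom ≫ p = D ◁ p ≫ (ρ_ D).hom ≫ q := by
    intro p q
    rw [← leftUnitor_naturality, ← whisker_exchange_assoc, unitors_equal, rightUnitor_naturality]
  have e1 : s ≫ coprod.desc (𝟙 _) 0 = D ◁ coprod.desc (𝟙 _) 0 ≫ (ρ_ D).hom ≫ q1 := by
    apply bin_ext hp
    · rw [reassoc_of% s1, ← MonoidalCategory.whiskerLeft_comp_assoc, coprod.inl_desc]; simp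
    · rw [reassoc_of% s2, ← MonoidalCategory.whiskerLeft_comp_assoc, coprod.inr_desc]
      simp [whisker_zero hp hZ]
  have e2 : s ≫ coprod.desc 0 (𝟙 _) = D ◁ coprod.desc 0 (𝟙 _) ≫ (ρ_ D).hom ≫ q2 := by
    apply bin_ext hp
    · rw [reassoc_of% s1, ← MonoidalCategory.whiskerLeft_comp_assoc, coprod.inl_desc]
      simp [whisker_zero hp hZ]
    · rw [reassoc_of% s2, ← MonoidalCategory.whiskerLeft_comp_assoc, coprod.inr_desc]; simp
  refine ⟨η ≫ s, ?_, ?_⟩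
  · rw [Category.assoc, e1, ← k]
    have := h1 =≫ coprod.desc (𝟙 _) 0
    rw [coprod.inl_desc] at this
    simpa using this.symm
  · rw [Category.assoc, e2, ← k]
    have := h2 =≫ coprod.desc 0 (𝟙 _)
    rw [coprod.inr_desc] at this
    simpa using this.symm

open Classical in
lemma diag_fin [HasFiniteCoproducts C] [HasZeroMorphisms C]
    (δ : 𝟙_ C ⟶ 𝟙_ C ⨿ 𝟙_ C)
    (δ1 : δ ≫ coprod.desc (𝟙 _) 0 = 𝟙 _) (δ2 : δ ≫ coprod.desc 0 (𝟙 _) = 𝟙 _)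
    {ι : Type} [Finite ι] (s : Finset ι) :
    ∃ d : 𝟙_ C ⟶ ∐ fun _ : ι => 𝟙_ C, ∀ k,
      d ≫ Sigma.desc (fun i => if i = k then 𝟙 (𝟙_ C) else 0) = if k ∈ s then 𝟙 _ else 0 := by
  induction s using Finset.induction_on with
  | empty => exact ⟨0, by simp⟩
  | insert a s ha ih =>
    obtain ⟨d, hd⟩ := ih
    refine ⟨δ ≫ coprod.desc (Sigma.ι (fun _ : ι => 𝟙_ C) a) d, fun k => ?_⟩
    rw [Category.assoc, coprod.desc_comp, hd, Sigma.ι_desc]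
    by_cases hk : a = k
    · subst hk
      simp [ha, δ1]
    · have hk' : ¬ k = a := fun h => hk h.symm
      by_cases hs : k ∈ s
      · simp [hk, hs, δ2]
      · have : (coprod.desc 0 0 : 𝟙_ C ⨿ 𝟙_ C ⟶ 𝟙_ C) = 0 := by
          apply coprod.hom_ext
          · rw [coprod.inl_desc, comp_zero]
          · rw [coprod.inr_desc, comp_zero]
        simp [hk, hk', hs, this]

open Classical in
lemma backward_fin [HasFiniteCoproducts C] [HasZeroMorphisms C]
    (hp : ∀ A : C, PreservesFiniteCoproducts (tensorLeft A))
    {Z : C} (hZ : IsInitial Z)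
    {ι : Type} [Finite ι] (d : 𝟙_ C ⟶ ∐ fun _ : ι => 𝟙_ C)
    (hd : ∀ k, d ≫ Sigma.desc (fun i => if i = k then 𝟙 (𝟙_ C) else 0) = 𝟙 _)
    (f : ι → C) (P : ∀ k, (∐ f) ⟶ f k)
    (P1 : ∀ k, Sigma.ι f k ≫ P k = 𝟙 _) (P0 : ∀ i k, i ≠ k → Sigma.ι f i ≫ P k = 0) :
    Nonempty (IsLimit (Fan.mk (∐ f) P)) := by
  choose c hc using fun (A : C) (w : ∀ k, A ⟶ f k) =>
    sig_desc hp A (∐ f) (fun i => (ρ_ A).hom ≫ w i ≫ Sigma.ι f i)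
  let L : ∀ (A : C) (w : ∀ k, A ⟶ f k), A ⟶ ∐ f := fun A w => (ρ_ A).inv ≫ A ◁ d ≫ c A w
  have nat : ∀ (A B : C) (h : A ⟶ B) (w : ∀ k, B ⟶ f k),
      h ≫ L B w = L A (fun k => h ≫ w k) := by
    intro A B h w
    have : c A (fun k => h ≫ w k) = h ▷ _ ≫ c B w := by
      apply sig_ext hp
      intro i
      rw [hc, whisker_exchange_assoc, hc]
      simp
    simp only [L]
    rw [this, whisker_exchange_assoc, ← rightUnitor_inv_naturality_assoc]
  have gen : ∀ (A W : C) (k : ι) (m : A ⊗ 𝟙_ C ⟶ W) (t : A ⊗ (∐ fun _ : ι => 𝟙_ C) ⟶ W),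
      (∀ i, A ◁ Sigma.ι (fun _ : ι => 𝟙_ C) i ≫ t = if i = k then m else 0) →
      A ◁ d ≫ t = m := by
    intro A W k m t ht
    have : t = A ◁ (Sigma.desc (fun i => if i = k then 𝟙 (𝟙_ C) else 0)) ≫ m := by
      apply sig_ext hp
      intro i
      rw [ht, ← MonoidalCategory.whiskerLeft_comp_assoc, Sigma.ι_desc]
      by_cases hi : i = k
      · simp [hi]
      · simp [hi, whisker_zero hp hZ]
    rw [this, ← MonoidalCategory.whiskerLeft_comp_assoc, hd]
    simp
  have fac : ∀ (A : C) (w : ∀ k, A ⟶ f k) (k : ι), L A w ≫ P k = w k := by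
    intro A w k
    have := gen A _ k ((ρ_ A).hom ≫ w k) (c A w ≫ P k) (by
      intro i
      rw [reassoc_of% (hc A w i)]
      by_cases hi : i = k
      · subst hi; simp [P1]
      · simp [hi, P0 i k hi])
    simp [L, this]
  have idd : L (∐ f) P = 𝟙 _ := by
    apply Sigma.hom_ext
    intro j
    rw [nat]
    have := gen (f j) _ j ((ρ_ _).hom ≫ Sigma.ι f j) (c (f j) (fun k => Sigma.ι f j ≫ P k)) (by
      intro i
      rw [hc]
      by_cases hi : i = j
      · subst hi; simp [reassoc_of% (P1 i)]
      · simp [hi, reassoc_of% (P0 j i (Ne.symm hi))])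
    simp [L, this]
  refine ⟨Fan.IsLimit.mk _ (fun t => L t.pt t.proj) (fun t j => fac _ _ _) ?_⟩
  intro t m hm
  have hm' : ∀ j, m ≫ P j = t.proj j := hm
  change t.pt ⟶ ∐ f at m
  have := nat t.pt (∐ f) m P
  rw [idd, Category.comp_id] at this
  rw [this]
  simp only [hm']

end BiprodAux

/-- **Theorem 1.** Let `C` be a monoidal category possessing finite coproducts, preserved
by each functor `A ⊗ (−)`.  Then `C` has a zero object and finite biproducts — i.e. there
is an object `Z` that is both initial and terminal, and every finite family of objects
admits a coproduct cocone whose induced projections (`inj k ≫ p k = 𝟙`, and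
`inj i ≫ p k` the zero morphism through `Z` for `i ≠ k`) form a product cone — if and
only if the initial object `⊥_ C` and the coproduct `𝟙_ C ⨿ 𝟙_ C` of the unit with
itself admit right duals. -/
theorem hasBiproducts_iff_rightDuals {C : Type u} [Category.{v} C] [MonoidalCategory C]
    [HasFiniteCoproducts C]
    (hp : ∀ A : C, PreservesFiniteCoproducts (tensorLeft A)) :
    (∃ (Z : C) (hZi : IsInitial Z) (hZt : IsTerminal Z),
      ∀ (ι : Type) (_ : Finite ι) (f : ι → C),
        ∃ (A : C) (inj : ∀ i, f i ⟶ A) (p : ∀ k, A ⟶ f k),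
          Nonempty (IsColimit (Cofan.mk A inj)) ∧
          (∀ k, inj k ≫ p k = 𝟙 (f k)) ∧
          (∀ i k, i ≠ k → inj i ≫ p k = hZt.from (f i) ≫ hZi.to (f k)) ∧
          Nonempty (IsLimit (Fan.mk A p))) ↔
    ((∃ (Y : C) (η : 𝟙_ C ⟶ Y ⊗ (⊥_ C)), IsRightDual (⊥_ C) Y η) ∧
     (∃ (D : C) (η : 𝟙_ C ⟶ D ⊗ (𝟙_ C ⨿ 𝟙_ C)), IsRightDual (𝟙_ C ⨿ 𝟙_ C) D η)) := by
  constructor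
  · rintro ⟨Z, hZi, hZt, H⟩
    letI : HasZeroObject C := ⟨Z, ⟨fun Y => ⟨⟨⟨hZi.to Y⟩, fun _ => hZi.hom_ext _ _⟩⟩,
      fun Y => ⟨⟨⟨hZt.from Y⟩, fun _ => hZt.hom_ext _ _⟩⟩⟩⟩
    letI : HasZeroMorphisms C := HasZeroObject.zeroMorphismsOfZeroObject
    have hz : ∀ X Y : C, hZt.from X ≫ hZi.to Y = 0 := fun X Y => by
      rw [hZi.hom_ext (hZi.to Y) 0, comp_zero]
    refine ⟨BiprodAux.forward_zero hp hZi hZt, BiprodAux.forward_two hp hZi ?_⟩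
    intro f
    obtain ⟨A, inj, p, h1, h2, h3, h4⟩ := H Bool inferInstance f
    exact ⟨A, inj, p, h1, h2, fun i k hik => by rw [h3 i k hik, hz], h4⟩
  · rintro ⟨⟨Y, e, -⟩, D, η, hD⟩
    obtain ⟨iY⟩ := BiprodAux.tensor_initial hp Y (initialIsInitial (C := C))
    obtain ⟨hZt⟩ := BiprodAux.terminal_of_map hp (e ≫ iY.to _)
    have hZi : IsInitial (⊥_ C) := initialIsInitial
    letI : HasZeroObject C := ⟨⊥_ C, ⟨fun Y => ⟨⟨⟨hZi.to Y⟩, fun _ => hZi.hom_ext _ _⟩⟩,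
      fun Y => ⟨⟨⟨hZt.from Y⟩, fun _ => hZt.hom_ext _ _⟩⟩⟩⟩
    letI : HasZeroMorphisms C := HasZeroObject.zeroMorphismsOfZeroObject
    have hz : ∀ X Y : C, hZt.from X ≫ hZi.to Y = 0 := fun X Y => by
      rw [hZi.hom_ext (hZi.to Y) 0, comp_zero]
    obtain ⟨δ, δ1, δ2⟩ := BiprodAux.diag_two hp hZi hD
    refine ⟨⊥_ C, hZi, hZt, fun ι hι f => ?_⟩
    classical
    have := Fintype.ofFinite ι
    obtain ⟨d, hd⟩ := BiprodAux.diag_fin δ δ1 δ2 (Finset.univ : Finset ι)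
    let P : ∀ k, (∐ f) ⟶ f k := fun k =>
      Sigma.desc (fun i => if h : i = k then eqToHom (by rw [h]) else 0)
    have P1 : ∀ k, Sigma.ι f k ≫ P k = 𝟙 _ := fun k => by simp [P]
    have P0 : ∀ i k, i ≠ k → Sigma.ι f i ≫ P k = 0 := fun i k h => by simp [P, h]
    refine ⟨∐ f, Sigma.ι f, P, ⟨coproductIsCoproduct f⟩, P1, fun i k h => by rw [P0 i k h, hz],
      BiprodAux.backward_fin hp hZi d (fun k => ?_) f P P1 P0⟩
    have := hd k
    rw [if_pos (Finset.mem_univ k)] at this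
    convert this
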